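/- arXiv:2408.02853 — 3 statements merged into one kernel-verified Lean document; each statement's English description precedes it below -/
import Mathlib

section
/- Let (Ω, F, P) be a probability space, θ > 0, and let X be a real random variable with exp(-θX) integrable with respect to P. Let Q be a probability measure on (Ω, F) absolutely continuous with respect to P such that X is Q-integrable and the relative entropy H(Q|P) is finite. Then E_Q[−X] − (1/θ)·H(Q|P) ≤ (1/θ)·log E_P[exp(-θX)]. -/
open MeasureTheory Real

/-!
The defect in the inequality is `1 / θ` times the relative entropy of `Q` with respect to the
Gibbs measure with density `exp (-θ X) / E_P[exp (-θ X)]` relative to `P`, which is nonnegative.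
-/

section DonskerVaradhan

open InformationTheory

variable {α : Type*} {mα : MeasurableSpace α} {μ ν : Measure α}

lemma sigmaFinite_of_integrable_of_ae_ne_zero {E : Type*} [NormedAddCommGroup E] {f : α → E}
    (hf : Integrable f μ) (hf_ne_zero : ∀ᵐ x ∂μ, f x ≠ 0) : SigmaFinite μ := by
  obtain ⟨t, ht, hf_zero, ht_sigma⟩ := hf.aefinStronglyMeasurable.exists_set_sigmaFinite
  have hmem : ∀ᵐ x ∂μ, x ∈ t := by
    filter_upwards [(ae_restrict_iff' ht.compl).mp hf_zero, hf_ne_zero] with x hzero hne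
    exact not_not.mp (mt hzero hne)
  rwa [Measure.restrict_eq_self_of_ae_mem hmem] at ht_sigma

lemma sigmaFinite_of_integrable_exp {f : α → ℝ} (hf : Integrable (fun x ↦ exp (f x)) μ) :
    SigmaFinite μ :=
  sigmaFinite_of_integrable_of_ae_ne_zero hf (.of_forall fun x ↦ (exp_pos (f x)).ne')

variable [IsProbabilityMeasure μ] {f : α → ℝ}

lemma toReal_klDiv_tilted_right (hμν : μ ≪ ν) (hfμ : Integrable f μ)
    (hfν : Integrable (fun x ↦ exp (f x)) ν) (h_int : Integrable (llr μ ν) μ) :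
    (klDiv μ (ν.tilted f)).toReal =
      ∫ x, llr μ ν x ∂μ - ∫ x, f x ∂μ + log (∫ x, exp (f x) ∂ν) := by
  have : SigmaFinite ν := sigmaFinite_of_integrable_exp hfν
  have : NeZero ν := ⟨fun hν ↦
    IsProbabilityMeasure.ne_zero μ (Measure.absolutelyContinuous_zero_iff.mp (hν ▸ hμν))⟩
  have : IsProbabilityMeasure (ν.tilted f) := isProbabilityMeasure_tilted hfν
  rw [toReal_klDiv_of_measure_eq (hμν.trans (absolutelyContinuous_tilted hfν)) (by simp),
    integral_llr_tilted_right hμν hfμ hfν h_int]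

theorem integral_sub_integral_llr_le_log_integral_exp (hμν : μ ≪ ν) (hfμ : Integrable f μ)
    (hfν : Integrable (fun x ↦ exp (f x)) ν) (h_int : Integrable (llr μ ν) μ) :
    ∫ x, f x ∂μ - ∫ x, llr μ ν x ∂μ ≤ log (∫ x, exp (f x) ∂ν) := by
  have gibbs := (klDiv μ (ν.tilted f)).toReal_nonneg
  rw [toReal_klDiv_tilted_right hμν hfμ hfν h_int] at gibbs
  linarith

end DonskerVaradhan

theorem entropic_weak_duality_general
    {Ω : Type*} [MeasurableSpace Ω] (P : Measure Ω)
    (θ : ℝ) (hθ : 0 < θ) (X : Ω → ℝ)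
    (hX : Integrable (fun ω => Real.exp (-θ * X ω)) P)
    (Q : Measure Ω) [IsProbabilityMeasure Q] (hQP : Q ≪ P)
    (hXQ : Integrable X Q)
    (hH : Integrable
      (fun ω => (Q.rnDeriv P ω).toReal * Real.log (Q.rnDeriv P ω).toReal) P) :
    (∫ ω, -X ω ∂Q)
      - (1 / θ) * ∫ ω, (Q.rnDeriv P ω).toReal * Real.log (Q.rnDeriv P ω).toReal ∂P
      ≤ (1 / θ) * Real.log (∫ ω, Real.exp (-θ * X ω) ∂P) := by
  have : SigmaFinite P := sigmaFinite_of_integrable_exp hX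
  rw [integral_rnDeriv_mul_log hQP]
  have donsker_varadhan :
      ∫ ω, -θ * X ω ∂Q - ∫ ω, llr Q P ω ∂Q ≤ log (∫ ω, exp (-θ * X ω) ∂P) :=
    integral_sub_integral_llr_le_log_integral_exp hQP (hXQ.const_mul (-θ)) hX
      ((integrable_rnDeriv_mul_log_iff hQP).mp hH)
  calc (∫ ω, -X ω ∂Q) - (1 / θ) * ∫ ω, llr Q P ω ∂Q
      = (1 / θ) * (∫ ω, -θ * X ω ∂Q - ∫ ω, llr Q P ω ∂Q) := by
        rw [integral_neg, integral_const_mul]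
        field_simp
    _ ≤ (1 / θ) * log (∫ ω, exp (-θ * X ω) ∂P) := by gcongr

/-- Weak duality for the entropic risk measure: for any probability measure `Q ≪ P`
with `X` `Q`-integrable and finite relative entropy
`H(Q|P) = E_P[(dQ/dP) log (dQ/dP)]`, one has
`E_Q[-X] - (1/θ) H(Q|P) ≤ (1/θ) log E_P[exp (-θ X)]`. -/
theorem entropic_weak_duality
    {Ω : Type*} [MeasurableSpace Ω] (P : Measure Ω) [IsProbabilityMeasure P]
    (θ : ℝ) (hθ : 0 < θ) (X : Ω → ℝ) (hXm : Measurable X)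
    (hX : Integrable (fun ω => Real.exp (-θ * X ω)) P)
    (Q : Measure Ω) [IsProbabilityMeasure Q] (hQP : Q ≪ P)
    (hXQ : Integrable X Q)
    (hH : Integrable
      (fun ω => (Q.rnDeriv P ω).toReal * Real.log (Q.rnDeriv P ω).toReal) P) :
    (∫ ω, -X ω ∂Q)
      - (1 / θ) * ∫ ω, (Q.rnDeriv P ω).toReal * Real.log (Q.rnDeriv P ω).toReal ∂P
      ≤ (1 / θ) * Real.log (∫ ω, Real.exp (-θ * X ω) ∂P) :=
  entropic_weak_duality_general P θ hθ X hX Q hQP hXQ hH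
end

section
/- Let (Ω, F, P) be a probability space, θ > 0, and let X be a real random variable such that exp(-θX) and X·exp(-θX) are P-integrable. Define the probability measure Q by dQ/dP = exp(-θX) / E_P[exp(-θX)]. Then Q ≪ P, H(Q|P) is finite, and E_Q[−X] − (1/θ)·H(Q|P) = (1/θ)·log E_P[exp(-θX)], i.e. Q attains the supremum in the dual representation of the entropic risk measure. -/
open MeasureTheory Real

/-!
Write `Z = E_P[exp (-θ X)]`. The measure `Q` is the exponential tilting of `P` by `-θ X`, so the
log-density `log (dQ/dP) = -θ X - log Z` is affine in `X`. Integrating it against `Q` gives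
`H(Q|P) = -θ E_Q[X] - log Z`; in `E_Q[-X] - H(Q|P) / θ` the terms in `E_Q[X]` cancel.
-/

section Tilted

variable {α : Type*} [MeasurableSpace α] {μ : Measure α} {f : α → ℝ}

/-- The density of the exponentially tilted measure `μ.tilted f` with respect to `μ`. It is
real-valued, so that the integrand `p log p` of the relative entropy can be formed from it, and is
zero when `exp ∘ f` is not integrable, in agreement with `μ.tilted f = 0`. -/
noncomputable def tiltedDensity (μ : Measure α) (f : α → ℝ) (x : α) : ℝ :=
  exp (f x) / ∫ y, exp (f y) ∂μ

lemma integrable_tiltedDensity_smul_iff {E : Type*} [NormedAddCommGroup E] [NormedSpace ℝ E]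
    (hf : AEMeasurable f μ) {u : α → E} :
    Integrable (fun x ↦ tiltedDensity μ f x • u x) μ ↔ Integrable u (μ.tilted f) := by
  have density_nonneg (x : α) : 0 ≤ tiltedDensity μ f x := by unfold tiltedDensity; positivity
  have density_aemeasurable : AEMeasurable (tiltedDensity μ f) μ := by
    unfold tiltedDensity; fun_prop
  change _ ↔ Integrable u (μ.withDensity fun x ↦ ENNReal.ofReal (tiltedDensity μ f x))
  rw [integrable_withDensity_iff_integrable_smul₀' density_aemeasurable.ennreal_ofReal (by simp)]
  simp only [ENNReal.toReal_ofReal (density_nonneg _)]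

lemma log_tiltedDensity [NeZero μ] (hf : Integrable (fun x ↦ exp (f x)) μ) (x : α) :
    log (tiltedDensity μ f x) = f x - log (∫ y, exp (f y) ∂μ) := by
  rw [tiltedDensity, log_div (exp_ne_zero _) (integral_exp_pos hf).ne', log_exp]

lemma integrable_tiltedDensity_mul_log [NeZero μ] (hf : Integrable (fun x ↦ exp (f x)) μ)
    (hf' : Integrable f (μ.tilted f)) :
    Integrable (fun x ↦ tiltedDensity μ f x * log (tiltedDensity μ f x)) μ := by
  have := isProbabilityMeasure_tilted hf
  simp only [← smul_eq_mul, log_tiltedDensity hf]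
  exact (integrable_tiltedDensity_smul_iff (aemeasurable_of_aemeasurable_exp hf.aemeasurable)).2
    (hf'.sub (integrable_const _))

lemma integral_tiltedDensity_mul_log [NeZero μ] (hf : Integrable (fun x ↦ exp (f x)) μ)
    (hf' : Integrable f (μ.tilted f)) :
    ∫ x, tiltedDensity μ f x * log (tiltedDensity μ f x) ∂μ =
      ∫ x, f x ∂(μ.tilted f) - log (∫ x, exp (f x) ∂μ) := by
  have := isProbabilityMeasure_tilted hf
  calc ∫ x, tiltedDensity μ f x * log (tiltedDensity μ f x) ∂μ
      = ∫ x, log (tiltedDensity μ f x) ∂(μ.tilted f) := (integral_tilted f _).symm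
    _ = ∫ x, (f x - log (∫ y, exp (f y) ∂μ)) ∂(μ.tilted f) := by simp only [log_tiltedDensity hf]
    _ = ∫ x, f x ∂(μ.tilted f) - log (∫ x, exp (f x) ∂μ) := by
      rw [integral_sub hf' (integrable_const _), integral_const, probReal_univ, one_smul]

end Tilted

theorem entropic_dual_attained_general
    {Ω : Type*} [MeasurableSpace Ω] (P : Measure Ω) [NeZero P] {θ : ℝ} (hθ : θ ≠ 0) {X : Ω → ℝ}
    (hX : Integrable (fun ω ↦ exp (-θ * X ω)) P)
    (hXe : Integrable (fun ω ↦ X ω * exp (-θ * X ω)) P)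
    {g : Ω → ℝ} (hg : g = tiltedDensity P fun ω ↦ -θ * X ω)
    {Q : Measure Ω} (hQ : Q = P.tilted fun ω ↦ -θ * X ω) :
    IsProbabilityMeasure Q ∧ Q ≪ P ∧
    Integrable (fun ω ↦ g ω * log (g ω)) P ∧
    (∫ ω, -X ω ∂Q) - (1 / θ) * ∫ ω, g ω * log (g ω) ∂P
      = (1 / θ) * log (∫ ω, exp (-θ * X ω) ∂P) := by
  subst hg hQ
  have integrable_X : Integrable X (P.tilted fun ω ↦ -θ * X ω) :=
    (integrable_tilted_iff hX X).2 (by simpa only [smul_eq_mul, mul_comm] using hXe)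
  have integrable_exponent := integrable_X.const_mul (-θ)
  refine ⟨isProbabilityMeasure_tilted hX, tilted_absolutelyContinuous P _,
    integrable_tiltedDensity_mul_log hX integrable_exponent, ?_⟩
  rw [integral_tiltedDensity_mul_log hX integrable_exponent, integral_neg, integral_const_mul]
  field_simp
  ring

/-- The optimal measure in the dual representation of the entropic risk measure:
with density `dQ/dP = exp (-θ X) / E_P[exp (-θ X)]`, the measure `Q` is a probability
measure absolutely continuous w.r.t. `P`, its relative entropy
`H(Q|P) = E_P[(dQ/dP) log (dQ/dP)]` is finite, and
`E_Q[-X] - (1/θ) H(Q|P) = (1/θ) log E_P[exp (-θ X)]`, i.e. `Q` attains the supremum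
in the dual representation. -/
theorem entropic_dual_attained
    {Ω : Type*} [MeasurableSpace Ω] (P : Measure Ω) [IsProbabilityMeasure P]
    (θ : ℝ) (hθ : 0 < θ) (X : Ω → ℝ) (hXm : Measurable X)
    (hX : Integrable (fun ω => Real.exp (-θ * X ω)) P)
    (hXe : Integrable (fun ω => X ω * Real.exp (-θ * X ω)) P)
    (g : Ω → ℝ)
    (hg : g = fun ω => Real.exp (-θ * X ω) / ∫ ω', Real.exp (-θ * X ω') ∂P)
    (Q : Measure Ω) (hQ : Q = P.withDensity (fun ω => ENNReal.ofReal (g ω))) :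
    IsProbabilityMeasure Q ∧ Q ≪ P ∧
    Integrable (fun ω => g ω * Real.log (g ω)) P ∧
    (∫ ω, -X ω ∂Q) - (1 / θ) * ∫ ω, g ω * Real.log (g ω) ∂P
      = (1 / θ) * Real.log (∫ ω, Real.exp (-θ * X ω) ∂P) := by
  subst hg hQ
  exact entropic_dual_attained_general P hθ.ne' hX hXe rfl rfl
end

section
/- Let (Ω, F, P) be a probability space, θ > 0, and let X be a real random variable such that exp(-θX) is integrable. Then (1/θ)·log E[exp(-θX)] = sup over all probability measures Q ≪ P with X Q-integrable and H(Q|P) < ∞ of { E_Q[−X] − (1/θ)·H(Q|P) }, provided X·exp(-θX) is also P-integrable (so that the supremum is attained). -/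
open MeasureTheory Real

/-!
Tilting `P` by `f = -θX` gives the Gibbs measure `P_f`, with density `exp f / E_P[exp f]`. For every
admissible `Q`, the gap `log E_P[exp f] - (E_Q[f] - H(Q|P))` equals `H(Q|P_f)`: it is nonnegative,
and it vanishes at `Q = P_f`. Dividing by `θ` gives the dual representation.
-/

section Gibbs

variable {Ω : Type*} [MeasurableSpace Ω] {P : Measure Ω} [SigmaFinite P] {f : Ω → ℝ}

theorem integral_sub_integral_llr_le_log_integral_exp_s5 {Q : Measure Ω} [IsProbabilityMeasure Q]
    (hQP : Q ≪ P) (hfQ : Integrable f Q) (hQ : Integrable (llr Q P) Q)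
    (hf : Integrable (fun ω => exp (f ω)) P) :
    ∫ ω, f ω ∂Q - ∫ ω, llr Q P ω ∂Q ≤ log (∫ ω, exp (f ω) ∂P) := by
  have : NeZero P := ⟨fun hP => NeZero.ne Q (Measure.absolutelyContinuous_zero_iff.mp (hP ▸ hQP))⟩
  have := isProbabilityMeasure_tilted hf
  have gap_nonneg : 0 ≤ ∫ ω, llr Q (P.tilted f) ω ∂Q := by
    simpa using InformationTheory.integral_llr_add_sub_measure_univ_nonneg
      (hQP.trans (absolutelyContinuous_tilted hf)) (integrable_llr_tilted_right hQP hfQ hQ hf)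
  rw [integral_llr_tilted_right hQP hfQ hf hQ] at gap_nonneg
  linarith

theorem llr_tilted_self (hf : Integrable (fun ω => exp (f ω)) P) :
    llr (P.tilted f) P =ᵐ[P.tilted f] fun ω => f ω - log (∫ ω, exp (f ω) ∂P) :=
  (tilted_absolutelyContinuous P f).ae_le (log_rnDeriv_tilted_left_self hf)

theorem integrable_llr_tilted_self (hf : Integrable (fun ω => exp (f ω)) P)
    (hft : Integrable f (P.tilted f)) : Integrable (llr (P.tilted f) P) (P.tilted f) :=
  (integrable_congr (llr_tilted_self hf)).mpr (hft.sub (integrable_const _))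

theorem integral_sub_integral_llr_tilted_self [NeZero P]
    (hf : Integrable (fun ω => exp (f ω)) P) (hft : Integrable f (P.tilted f)) :
    ∫ ω, f ω ∂(P.tilted f) - ∫ ω, llr (P.tilted f) P ω ∂(P.tilted f)
      = log (∫ ω, exp (f ω) ∂P) := by
  have := isProbabilityMeasure_tilted hf
  rw [integral_congr_ae (llr_tilted_self hf), integral_sub hft (integrable_const _),
    integral_const, probReal_univ, one_smul, sub_sub_cancel]

theorem integral_neg_sub_entropy_eq_inv_mul {Q : Measure Ω} [SigmaFinite Q] (hQP : Q ≪ P)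
    {θ : ℝ} (hθ : θ ≠ 0) (X : Ω → ℝ) :
    (∫ ω, -X ω ∂Q) - (1 / θ) * ∫ ω, (Q.rnDeriv P ω).toReal * log (Q.rnDeriv P ω).toReal ∂P
      = (1 / θ) * (∫ ω, -θ * X ω ∂Q - ∫ ω, llr Q P ω ∂Q) := by
  rw [integral_rnDeriv_mul_log hQP, integral_const_mul, integral_neg]
  field_simp

end Gibbs

theorem entropic_dual_representation_general
    {Ω : Type*} [MeasurableSpace Ω] (P : Measure Ω) [SigmaFinite P] [NeZero P]
    (θ : ℝ) (hθ : 0 < θ) (X : Ω → ℝ)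
    (hX : Integrable (fun ω => exp (-θ * X ω)) P)
    (hXe : Integrable (fun ω => X ω * exp (-θ * X ω)) P) :
    IsGreatest
      {v : ℝ | ∃ Q : Measure Ω, IsProbabilityMeasure Q ∧ Q ≪ P ∧
        Integrable X Q ∧
        Integrable
          (fun ω => (Q.rnDeriv P ω).toReal * log (Q.rnDeriv P ω).toReal) P ∧
        v = (∫ ω, -X ω ∂Q)
            - (1 / θ) *
              ∫ ω, (Q.rnDeriv P ω).toReal * log (Q.rnDeriv P ω).toReal ∂P}
      ((1 / θ) * log (∫ ω, exp (-θ * X ω) ∂P)) := by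
  constructor
  · have := isProbabilityMeasure_tilted hX
    have hac := tilted_absolutelyContinuous P fun ω => -θ * X ω
    have hXt : Integrable X (P.tilted fun ω => -θ * X ω) :=
      (integrable_tilted_iff hX X).mpr (by simpa only [smul_eq_mul, mul_comm] using hXe)
    have hent := integrable_llr_tilted_self hX (hXt.const_mul (-θ))
    refine ⟨_, this, hac, hXt, (integrable_rnDeriv_mul_log_iff hac).mpr hent, ?_⟩
    rw [integral_neg_sub_entropy_eq_inv_mul hac hθ.ne',
      integral_sub_integral_llr_tilted_self hX (hXt.const_mul (-θ))]
  · rintro v ⟨Q, _, hQP, hXQ, hent, rfl⟩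
    rw [integral_neg_sub_entropy_eq_inv_mul hQP hθ.ne']
    gcongr
    exact integral_sub_integral_llr_le_log_integral_exp_s5 hQP (hXQ.const_mul (-θ))
      ((integrable_rnDeriv_mul_log_iff hQP).mp hent) hX

/-- Dual representation of the static entropic risk measure: provided `X exp (-θ X)`
is `P`-integrable, `(1/θ) log E_P[exp (-θ X)]` is the greatest element (an attained
supremum) of the set of values `E_Q[-X] - (1/θ) H(Q|P)` over all probability measures
`Q ≪ P` with `X` `Q`-integrable and finite relative entropy
`H(Q|P) = E_P[(dQ/dP) log (dQ/dP)]`. -/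
theorem entropic_dual_representation
    {Ω : Type*} [MeasurableSpace Ω] (P : Measure Ω) [IsProbabilityMeasure P]
    (θ : ℝ) (hθ : 0 < θ) (X : Ω → ℝ) (hXm : Measurable X)
    (hX : Integrable (fun ω => Real.exp (-θ * X ω)) P)
    (hXe : Integrable (fun ω => X ω * Real.exp (-θ * X ω)) P) :
    IsGreatest
      {v : ℝ | ∃ Q : Measure Ω, IsProbabilityMeasure Q ∧ Q ≪ P ∧
        Integrable X Q ∧
        Integrable
          (fun ω => (Q.rnDeriv P ω).toReal * Real.log (Q.rnDeriv P ω).toReal) P ∧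
        v = (∫ ω, -X ω ∂Q)
            - (1 / θ) *
              ∫ ω, (Q.rnDeriv P ω).toReal * Real.log (Q.rnDeriv P ω).toReal ∂P}
      ((1 / θ) * Real.log (∫ ω, Real.exp (-θ * X ω) ∂P)) :=
  entropic_dual_representation_general P θ hθ X hX hXe
end
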